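/- Maassen–Uffink relation for Rényi entropies: Let ρ be a density matrix on ℂ^A, let {M_x}_{x∈X} and {N_y}_{y∈Y} be POVMs on ℂ^A, and let c := max_{x,y} ‖ M_x^{1/2} N_y^{1/2} ‖ where ‖·‖ is the operator norm. Let P(x) := tr(M_x ρ) and Q(y) := tr(N_y ρ) be the outcome probability distributions. Then for all α, β ∈ (1/2,∞) with 1/α + 1/β = 2 and α ≠ 1: H_α(P) + H_β(Q) ≥ log(1/c), where H_γ(P) := (1−γ)⁻¹ · log(∑_x P(x)^γ) is the classical Rényi entropy of order γ. -/

import Mathlib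

open scoped Kronecker ComplexOrder
open Matrix

/-- Real power of a matrix via the functional calculus on the eigenvalues,
with the convention `0 ^ t = 0` (powers taken on the support). -/
noncomputable def matRpow {n : Type*} [Fintype n] [DecidableEq n]
    (A : Matrix n n ℂ) (t : ℝ) : Matrix n n ℂ :=
  if hA : A.IsHermitian then
    (hA.eigenvectorUnitary : Matrix n n ℂ) *
      Matrix.diagonal (fun i =>
        ((if hA.eigenvalues i = 0 then (0 : ℝ) else (hA.eigenvalues i) ^ t : ℝ) : ℂ)) *
      star (hA.eigenvectorUnitary : Matrix n n ℂ)
  else 0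

/-- Matrix logarithm on the support. -/
noncomputable def matLog {n : Type*} [Fintype n] [DecidableEq n]
    (A : Matrix n n ℂ) : Matrix n n ℂ :=
  if hA : A.IsHermitian then
    (hA.eigenvectorUnitary : Matrix n n ℂ) *
      Matrix.diagonal (fun i => ((Real.log (hA.eigenvalues i) : ℝ) : ℂ)) *
      star (hA.eigenvectorUnitary : Matrix n n ℂ)
  else 0

/-- Partial trace over the first tensor factor. -/
noncomputable def trFst {a b : Type*} [Fintype a] (M : Matrix (a × b) (a × b) ℂ) :
    Matrix b b ℂ :=
  Matrix.of fun j j' => ∑ i, M (i, j) (i, j')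

/-- Partial trace over the second tensor factor. -/
noncomputable def trSnd {a b : Type*} [Fintype b] (M : Matrix (a × b) (a × b) ℂ) :
    Matrix a a ℂ :=
  Matrix.of fun i i' => ∑ j, M (i, j) (i', j)

/-- Partial trace over the third factor of a tripartite system. -/
noncomputable def trThird {a b c : Type*} [Fintype c]
    (M : Matrix (a × b × c) (a × b × c) ℂ) : Matrix (a × b) (a × b) ℂ :=
  Matrix.of fun p p' => ∑ k, M (p.1, p.2, k) (p'.1, p'.2, k)

/-- Partial trace over the second factor of a tripartite system. -/
noncomputable def trSecond {a b c : Type*} [Fintype b]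
    (M : Matrix (a × b × c) (a × b × c) ℂ) : Matrix (a × c) (a × c) ℂ :=
  Matrix.of fun p p' => ∑ j, M (p.1, j, p.2) (p'.1, j, p'.2)

/-- Partial trace over the first two factors of a tripartite system. -/
noncomputable def trFstSnd {a b c : Type*} [Fintype a] [Fintype b]
    (M : Matrix (a × b × c) (a × b × c) ℂ) : Matrix c c ℂ :=
  Matrix.of fun k k' => ∑ i, ∑ j, M (i, j, k) (i, j, k')

/-- Partial trace over the first and third factors of a tripartite system. -/
noncomputable def trFstThird {a b c : Type*} [Fintype a] [Fintype c]
    (M : Matrix (a × b × c) (a × b × c) ℂ) : Matrix b b ℂ :=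
  Matrix.of fun j j' => ∑ i, ∑ k, M (i, j, k) (i, j', k)

/-- Quantum Rényi relative entropy `D_α(ρ‖σ)`. -/
noncomputable def renyiDiv {n : Type*} [Fintype n] [DecidableEq n]
    (α : ℝ) (ρ σ : Matrix n n ℂ) : ℝ :=
  (α - 1)⁻¹ * Real.log ((matRpow ρ α * matRpow σ (1 - α)).trace.re)

/-- Sandwiched quantum Rényi divergence `D̃_α(ρ‖σ)`. -/
noncomputable def sandwichedRenyiDiv {n : Type*} [Fintype n] [DecidableEq n]
    (α : ℝ) (ρ σ : Matrix n n ℂ) : ℝ :=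
  (α - 1)⁻¹ * Real.log
    ((matRpow (matRpow σ ((1 - α) / (2 * α)) * ρ * matRpow σ ((1 - α) / (2 * α))) α).trace.re)

/-- Quantum relative entropy `D(ρ‖σ)`. -/
noncomputable def relEntropy {n : Type*} [Fintype n] [DecidableEq n]
    (ρ σ : Matrix n n ℂ) : ℝ :=
  (ρ * (matLog ρ - matLog σ)).trace.re

/-!
With respect to the semi-inner product `⟨A, B⟩ = tr (A* B ρ)`, the kernel
`K x y = ⟨M_x, N_y⟩ / √(P(x) Q(y))` sends the vector `√Q` to `√P`. Cauchy–Schwarz together with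
`(∑ q_y N_y)* (∑ q_y N_y) ≤ ∑ |q_y|² N_y` shows that `K` is an `ℓ²`-contraction, and Cauchy–Schwarz
applied to `M_x ^ (1/2)` and `M_x ^ (1/2) N_y` shows that its entries are at most `c` in modulus.
When `1 < α`, Riesz–Thorin interpolation between `ℓ² → ℓ²` and `ℓ¹ → ℓ^∞` then gives
`‖√P‖_{2α} ≤ c ^ (1/β - 1) ‖√Q‖_{2β}`, whose logarithm is the entropy bound, with the constant
`2 log (1/c)`. The case `α < 1` follows by exchanging the two measurements.
-/

open Complex.HadamardThreeLines (verticalClosedStrip norm_le_interp_of_mem_verticalClosedStrip₀₁')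

section MatRpow

variable {n : Type*} [Fintype n] [DecidableEq n] {A : Matrix n n ℂ}

theorem isHermitian_matRpow (A : Matrix n n ℂ) (t : ℝ) : (matRpow A t).IsHermitian := by
  unfold matRpow
  split_ifs
  · refine isHermitian_mul_mul_conjTranspose _ (isHermitian_diagonal_of_self_adjoint _ ?_)
    exact funext fun _ ↦ Complex.conj_ofReal _
  · exact isHermitian_zero

theorem matRpow_mul_matRpow (hA : A.PosSemidef) (s t : ℝ) :
    matRpow A s * matRpow A t = matRpow A (s + t) := by
  have hU := Unitary.coe_star_mul_self hA.isHermitian.eigenvectorUnitary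
  have mul_cancel (B C U V : Matrix n n ℂ) (h : V * U = 1) :
      U * B * V * (U * C * V) = U * (B * C) * V := by
    simp only [Matrix.mul_assoc, ← Matrix.mul_assoc V U, h, Matrix.one_mul]
  simp only [matRpow, dif_pos hA.isHermitian, mul_cancel _ _ _ _ hU, diagonal_mul_diagonal,
    ← Complex.ofReal_mul]
  congr! 5 with i
  split_ifs with hi
  · exact zero_mul _
  · exact (Real.rpow_add ((hA.eigenvalues_nonneg i).lt_of_ne' hi) s t).symm

theorem matRpow_one (hA : A.IsHermitian) : matRpow A 1 = A := by
  conv_rhs => rw [hA.spectral_theorem, Unitary.conjStarAlgAut_apply]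
  rw [matRpow, dif_pos hA]
  congr! 4 with i
  simp +contextual

theorem matRpow_half_mul_self (hA : A.PosSemidef) :
    matRpow A (1 / 2) * matRpow A (1 / 2) = A := by
  rw [matRpow_mul_matRpow hA, add_halves, matRpow_one hA.isHermitian]

theorem norm_toEuclideanCLM_matRpow_mul_comm (A B : Matrix n n ℂ) (s t : ℝ) :
    ‖toEuclideanCLM (𝕜 := ℂ) (matRpow A s * matRpow B t)‖ =
      ‖toEuclideanCLM (𝕜 := ℂ) (matRpow B t * matRpow A s)‖ := by
  rw [← norm_star, ← map_star, star_eq_conjTranspose, conjTranspose_mul,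
    (isHermitian_matRpow A s).eq, (isHermitian_matRpow B t).eq]

end MatRpow

section RieszThorin

variable {X Y : Type*}

/-- The curve of vectors through `u` used in Thorin's proof: each entry keeps its phase and has
modulus `‖u x‖ ^ (p * (1 + re z) / 2)`, so that `∑ x, ‖u x‖ ^ p` is the squared `ℓ²`-norm of the
curve on the line `re z = 0` and its `ℓ¹`-norm on the line `re z = 1`. -/
noncomputable def thorinCurve (p : ℝ) (u : X → ℂ) (z : ℂ) (x : X) : ℂ :=
  u x / ‖u x‖ * (‖u x‖ : ℂ) ^ ((p : ℂ) / 2 * (1 + z))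

theorem differentiable_thorinCurve_apply (p : ℝ) (u : X → ℂ) (x : X) :
    Differentiable ℂ (thorinCurve p u · x) := by
  unfold thorinCurve
  rcases eq_or_ne (u x) 0 with hu | hu
  · simp [hu]
  · have hu' : (‖u x‖ : ℂ) ≠ 0 := by simpa using hu
    fun_prop (disch := simp [hu'])

theorem norm_thorinCurve_apply {p : ℝ} (hp : 0 < p) (u : X → ℂ) {z : ℂ} (hz : 0 ≤ z.re) (x : X) :
    ‖thorinCurve p u z x‖ = ‖u x‖ ^ (p / 2 * (1 + z.re)) := by
  have hre : ((p : ℂ) / 2 * (1 + z)).re = p / 2 * (1 + z.re) := by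
    rw [← Complex.ofReal_ofNat, ← Complex.ofReal_div, Complex.re_ofReal_mul, Complex.add_re,
      Complex.one_re]
  rcases eq_or_ne (u x) 0 with hu | hu
  · have hpos : 0 < p / 2 * (1 + z.re) := by positivity
    simp [thorinCurve, hu, Real.zero_rpow hpos.ne']
  · rw [thorinCurve, norm_mul, norm_div, Complex.norm_real, norm_norm,
      div_self (norm_ne_zero_iff.2 hu), one_mul,
      Complex.norm_cpow_eq_rpow_re_of_pos (norm_pos_iff.2 hu), hre]

theorem thorinCurve_two_div_sub_one {p : ℝ} (hp : p ≠ 0) (u : X → ℂ) :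
    thorinCurve p u ((2 / p - 1 : ℝ) : ℂ) = u := by
  have hp' : (p : ℂ) ≠ 0 := by exact_mod_cast hp
  have hexp : (p : ℂ) / 2 * (1 + ((2 / p - 1 : ℝ) : ℂ)) = 1 := by push_cast; field_simp; ring
  funext x
  rw [thorinCurve, hexp, Complex.cpow_one]
  exact div_mul_cancel_of_imp (by simp)

theorem norm_thorinCurve_apply_le {p : ℝ} (hp : 0 < p) (u : X → ℂ) {z : ℂ}
    (hz : z ∈ verticalClosedStrip 0 1) (x : X) :
    ‖thorinCurve p u z x‖ ≤ (1 + ‖u x‖) ^ p := by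
  obtain ⟨hz0, hz1⟩ : 0 ≤ z.re ∧ z.re ≤ 1 := hz
  rw [norm_thorinCurve_apply hp u hz0]
  calc ‖u x‖ ^ (p / 2 * (1 + z.re)) ≤ (1 + ‖u x‖) ^ (p / 2 * (1 + z.re)) := by gcongr; linarith
    _ ≤ (1 + ‖u x‖) ^ p :=
      Real.rpow_le_rpow_of_exponent_le (by linarith [norm_nonneg (u x)]) (by nlinarith)

variable [Fintype X] [Fintype Y]

theorem sum_norm_sq_thorinCurve {p : ℝ} (hp : 0 < p) (u : X → ℂ) {z : ℂ} (hz : z.re = 0) :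
    ∑ x, ‖thorinCurve p u z x‖ ^ 2 = ∑ x, ‖u x‖ ^ p := by
  refine Finset.sum_congr rfl fun x _ ↦ ?_
  rw [norm_thorinCurve_apply hp u hz.ge, hz, ← Real.rpow_mul_natCast (norm_nonneg _)]
  congr 1
  push_cast
  ring

theorem sum_norm_thorinCurve {p : ℝ} (hp : 0 < p) (u : X → ℂ) {z : ℂ} (hz : z.re = 1) :
    ∑ x, ‖thorinCurve p u z x‖ = ∑ x, ‖u x‖ ^ p := by
  refine Finset.sum_congr rfl fun x _ ↦ ?_
  rw [norm_thorinCurve_apply hp u (by simp [hz]), hz]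
  congr 1
  ring

theorem norm_dotProduct_mulVec_le_sum (K : Matrix X Y ℂ) (u : X → ℂ) (v : Y → ℂ) :
    ‖u ⬝ᵥ K *ᵥ v‖ ≤ ∑ x, ∑ y, ‖u x‖ * ‖K x y‖ * ‖v y‖ := by
  simp only [dotProduct, mulVec, Finset.mul_sum]
  refine (norm_sum_le _ _).trans (Finset.sum_le_sum fun x _ ↦ (norm_sum_le _ _).trans_eq ?_)
  simp only [norm_mul, mul_assoc]

theorem norm_dotProduct_mulVec_le_of_norm_apply_le {K : Matrix X Y ℂ} {c : ℝ}
    (hK : ∀ x y, ‖K x y‖ ≤ c) (u : X → ℂ) (v : Y → ℂ) :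
    ‖u ⬝ᵥ K *ᵥ v‖ ≤ c * ((∑ x, ‖u x‖) * ∑ y, ‖v y‖) :=
  calc ‖u ⬝ᵥ K *ᵥ v‖ ≤ ∑ x, ∑ y, ‖u x‖ * ‖K x y‖ * ‖v y‖ := norm_dotProduct_mulVec_le_sum K u v
    _ ≤ ∑ x, ∑ y, c * (‖u x‖ * ‖v y‖) := by
      refine Finset.sum_le_sum fun x _ ↦ Finset.sum_le_sum fun y _ ↦ ?_
      rw [mul_right_comm, mul_comm c]
      gcongr
      exact hK x y
    _ = c * ((∑ x, ‖u x‖) * ∑ y, ‖v y‖) := by rw [Finset.sum_mul_sum]; simp only [Finset.mul_sum]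

theorem differentiable_thorinCurve_dotProduct_mulVec (p : ℝ) (K : Matrix X Y ℂ) (u : X → ℂ)
    (v : Y → ℂ) :
    Differentiable ℂ fun z ↦ thorinCurve p u z ⬝ᵥ K *ᵥ thorinCurve p v z := by
  have := differentiable_thorinCurve_apply p u
  have := differentiable_thorinCurve_apply p v
  simp only [dotProduct, mulVec]
  fun_prop

theorem bddAbove_norm_thorinCurve_dotProduct_mulVec {p : ℝ} (hp : 0 < p) (K : Matrix X Y ℂ)
    (u : X → ℂ) (v : Y → ℂ) :
    BddAbove ((norm ∘ fun z ↦ thorinCurve p u z ⬝ᵥ K *ᵥ thorinCurve p v z) ''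
      verticalClosedStrip 0 1) := by
  refine ⟨∑ x, ∑ y, (1 + ‖u x‖) ^ p * ‖K x y‖ * (1 + ‖v y‖) ^ p, ?_⟩
  rintro _ ⟨z, hz, rfl⟩
  refine (norm_dotProduct_mulVec_le_sum K _ _).trans ?_
  gcongr
  · exact norm_thorinCurve_apply_le hp u hz _
  · exact norm_thorinCurve_apply_le hp v hz _

theorem norm_dotProduct_mulVec_le_interp {K : Matrix X Y ℂ} {a c p : ℝ} (ha : 0 ≤ a) (hc : 0 ≤ c)
    (hp1 : 1 ≤ p) (hp2 : p ≤ 2)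
    (hK2 : ∀ u v, ‖u ⬝ᵥ K *ᵥ v‖ ≤ a * (√(∑ x, ‖u x‖ ^ 2) * √(∑ y, ‖v y‖ ^ 2)))
    (hK1 : ∀ x y, ‖K x y‖ ≤ c) (u : X → ℂ) (v : Y → ℂ) :
    ‖u ⬝ᵥ K *ᵥ v‖ ≤ a ^ (2 - 2 / p) * c ^ (2 / p - 1) *
      ((∑ x, ‖u x‖ ^ p) ^ (1 / p) * (∑ y, ‖v y‖ ^ p) ^ (1 / p)) := by
  have hp : 0 < p := by linarith
  set U := ∑ x, ‖u x‖ ^ p with hU_def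
  set V := ∑ y, ‖v y‖ ^ p with hV_def
  have hU : 0 ≤ U := by positivity
  have hV : 0 ≤ V := by positivity
  have hp_lower : 1 ≤ 2 / p := (one_le_div hp).2 hp2
  have hp_upper : 2 / p ≤ 2 := div_le_self zero_le_two hp1
  have hθ : ((2 / p - 1 : ℝ) : ℂ) ∈ verticalClosedStrip 0 1 := by
    constructor <;> rw [Complex.ofReal_re] <;> linarith
  have h := norm_le_interp_of_mem_verticalClosedStrip₀₁'
    (fun z ↦ thorinCurve p u z ⬝ᵥ K *ᵥ thorinCurve p v z) hθ
    (differentiable_thorinCurve_dotProduct_mulVec p K u v).diffContOnCl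
    (bddAbove_norm_thorinCurve_dotProduct_mulVec hp K u v)
    (a := a * (U * V) ^ (1 / 2 : ℝ)) (b := c * (U * V))
    (fun z hz ↦ by
      rw [Real.mul_rpow hU hV, ← Real.sqrt_eq_rpow, ← Real.sqrt_eq_rpow,
        hU_def, hV_def, ← sum_norm_sq_thorinCurve hp u hz, ← sum_norm_sq_thorinCurve hp v hz]
      exact hK2 _ _)
    (fun z hz ↦ by
      simpa only [sum_norm_thorinCurve hp _ hz] using
        norm_dotProduct_mulVec_le_of_norm_apply_le hK1 (thorinCurve p u z) (thorinCurve p v z))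
  simp only [thorinCurve_two_div_sub_one hp.ne', Complex.ofReal_re] at h
  calc ‖u ⬝ᵥ K *ᵥ v‖
      ≤ (a * (U * V) ^ (1 / 2 : ℝ)) ^ (1 - (2 / p - 1)) * (c * (U * V)) ^ (2 / p - 1) := h
    _ = a ^ (2 - 2 / p) * c ^ (2 / p - 1) *
        (((U * V) ^ (1 / 2 : ℝ)) ^ (2 - 2 / p) * (U * V) ^ (2 / p - 1)) := by
      rw [Real.mul_rpow ha (by positivity), Real.mul_rpow hc (by positivity),
        show 1 - (2 / p - 1) = 2 - 2 / p by ring]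
      ring
    _ = a ^ (2 - 2 / p) * c ^ (2 / p - 1) * (U ^ (1 / p) * V ^ (1 / p)) := by
      rw [← Real.rpow_mul (by positivity), ← Real.rpow_add_of_nonneg (by positivity) ?_ ?_,
        show 1 / 2 * (2 - 2 / p) + (2 / p - 1) = 1 / p by ring, Real.mul_rpow hU hV]
      all_goals linarith

theorem exists_dotProduct_eq_Lp_norm {p q : ℝ} (hpq : p.HolderConjugate q) (w : X → ℂ) :
    ∃ u : X → ℂ, ∑ x, ‖u x‖ ^ p ≤ 1 ∧ u ⬝ᵥ w = ((∑ x, ‖w x‖ ^ q) ^ (1 / q) : ℝ) := by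
  obtain ⟨g, hg1, hg⟩ := (NNReal.isGreatest_Lp Finset.univ (‖w ·‖₊) hpq.symm).1
  refine ⟨fun x ↦ g x * (star (w x) / ‖w x‖), ?_, ?_⟩
  · calc ∑ x, ‖(g x : ℂ) * (star (w x) / ‖w x‖)‖ ^ p ≤ ∑ x, (g x : ℝ) ^ p := by
          gcongr with x
          · exact hpq.nonneg
          · simpa using mul_le_of_le_one_right (g x).2 (div_self_le_one ‖w x‖)
      _ ≤ 1 := by exact_mod_cast hg1
  · have hg' : ∑ x, ‖w x‖ * g x = (∑ x, ‖w x‖ ^ q) ^ (1 / q) := by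
      simpa using congrArg NNReal.toReal hg
    rw [← hg', dotProduct, Complex.ofReal_sum]
    refine Finset.sum_congr rfl fun x _ ↦ ?_
    have hsign : star (w x) / ‖w x‖ * w x = ‖w x‖ := by
      rw [div_mul_eq_mul_div, Complex.star_def, Complex.conj_mul', sq, mul_self_div_self]
    rw [mul_assoc, hsign, mul_comm, Complex.ofReal_mul]

theorem rpow_sum_norm_mulVec_le_interp {K : Matrix X Y ℂ} {a c p q : ℝ} (ha : 0 ≤ a) (hc : 0 ≤ c)
    (hpq : p.HolderConjugate q) (hp2 : p ≤ 2)
    (hK2 : ∀ u v, ‖u ⬝ᵥ K *ᵥ v‖ ≤ a * (√(∑ x, ‖u x‖ ^ 2) * √(∑ y, ‖v y‖ ^ 2)))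
    (hK1 : ∀ x y, ‖K x y‖ ≤ c) (v : Y → ℂ) :
    (∑ x, ‖(K *ᵥ v) x‖ ^ q) ^ (1 / q) ≤
      a ^ (2 - 2 / p) * c ^ (2 / p - 1) * (∑ y, ‖v y‖ ^ p) ^ (1 / p) := by
  obtain ⟨u, hu, huv⟩ := exists_dotProduct_eq_Lp_norm hpq (K *ᵥ v)
  have hu' : (∑ x, ‖u x‖ ^ p) ^ (1 / p) ≤ 1 :=
    Real.rpow_le_one (by positivity) hu hpq.one_div_nonneg
  calc (∑ x, ‖(K *ᵥ v) x‖ ^ q) ^ (1 / q) = ‖u ⬝ᵥ K *ᵥ v‖ := by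
        rw [huv, Complex.norm_real, Real.norm_of_nonneg (by positivity)]
    _ ≤ a ^ (2 - 2 / p) * c ^ (2 / p - 1) *
        ((∑ x, ‖u x‖ ^ p) ^ (1 / p) * (∑ y, ‖v y‖ ^ p) ^ (1 / p)) :=
      norm_dotProduct_mulVec_le_interp ha hc hpq.lt.le hp2 hK2 hK1 u v
    _ ≤ a ^ (2 - 2 / p) * c ^ (2 / p - 1) * (∑ y, ‖v y‖ ^ p) ^ (1 / p) := by
      gcongr
      exact mul_le_of_le_one_left (by positivity) hu'

end RieszThorin

section RenyiEntropy

/-- The classical Rényi entropy `H_γ(P)` of order `γ ≠ 1`, in nats; `P` need not be normalized. -/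
noncomputable def renyiEntropy {X : Type*} [Fintype X] (γ : ℝ) (P : X → ℝ) : ℝ :=
  (1 - γ)⁻¹ * Real.log (∑ x, P x ^ γ)

theorem holderConjugate_two_mul {α β : ℝ} (hα : 1 / 2 < α) (hαβ : 1 / α + 1 / β = 2) :
    (2 * α).HolderConjugate (2 * β) := by
  refine Real.holderConjugate_iff.2 ⟨by linarith, ?_⟩
  rw [mul_inv, mul_inv, ← mul_add, ← one_div α, ← one_div β, hαβ]
  norm_num

theorem sum_rpow_pos {X : Type*} [Fintype X] {P : X → ℝ} (hP : 0 < P) (γ : ℝ) :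
    0 < ∑ x, P x ^ γ := by
  obtain ⟨hP0, x, hx⟩ := Pi.lt_def.1 hP
  exact Finset.sum_pos' (fun x _ ↦ Real.rpow_nonneg (hP0 x) γ)
    ⟨x, Finset.mem_univ x, Real.rpow_pos_of_pos hx γ⟩

theorem two_mul_log_one_div_le_of_rpow_le {S T c α β : ℝ} (hS : 0 < S) (hT : 0 < T) (hc : 0 ≤ c)
    (hα : 1 < α) (hαβ : 1 / α + 1 / β = 2)
    (h : S ^ (1 / (2 * α)) ≤ c ^ (2 / (2 * β) - 1) * T ^ (1 / (2 * β))) :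
    2 * Real.log (1 / c) ≤ (1 - α)⁻¹ * Real.log S + (1 - β)⁻¹ * Real.log T := by
  obtain ⟨θ, hθ⟩ : ∃ θ, θ = 1 - 1 / α := ⟨_, rfl⟩
  have hα0 : 0 < α := by linarith
  have hθ0 : 0 < θ := by rw [hθ, sub_pos, div_lt_one hα0]; exact hα
  have hαθ : 1 / α = 1 - θ := by linarith
  have hβθ : 1 / β = 1 + θ := by linarith
  have hβ0 : 0 < β := one_div_pos.1 (by linarith)
  have coeff_α : (1 - α)⁻¹ = -((1 - θ) / θ) := by
    have h_mul : α * (1 - θ) = 1 := by rw [← hαθ, mul_one_div_cancel hα0.ne']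
    exact inv_eq_of_mul_eq_one_right (by field_simp; linarith only [h_mul])
  have coeff_β : (1 - β)⁻¹ = (1 + θ) / θ := by
    have h_mul : β * (1 + θ) = 1 := by rw [← hβθ, mul_one_div_cancel hβ0.ne']
    exact inv_eq_of_mul_eq_one_right (by field_simp; linarith only [h_mul])
  rw [div_mul_eq_div_div_swap 1 2 α, div_mul_eq_div_div_swap 1 2 β,
    div_mul_cancel_left₀ (two_ne_zero' ℝ) β, ← one_div β, hαθ, hβθ, add_sub_cancel_left] at h
  have hc0 : 0 < c := by
    refine hc.lt_of_ne' fun hc0 ↦ ?_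
    rw [hc0, Real.zero_rpow hθ0.ne', zero_mul] at h
    exact h.not_gt (Real.rpow_pos_of_pos hS _)
  have hlog := Real.log_le_log (Real.rpow_pos_of_pos hS _) h
  rw [Real.log_mul (Real.rpow_pos_of_pos hc0 _).ne' (Real.rpow_pos_of_pos hT _).ne',
    Real.log_rpow hS, Real.log_rpow hc0, Real.log_rpow hT] at hlog
  rw [coeff_α, coeff_β, one_div, Real.log_inv]
  calc 2 * -Real.log c ≤ ((1 + θ) * Real.log T - (1 - θ) * Real.log S) / θ := by
        rw [le_div_iff₀ hθ0]; linarith only [hlog]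
    _ = _ := by ring

theorem two_mul_log_one_div_le_renyiEntropy_add {X Y : Type*} [Fintype X] [Fintype Y]
    {P : X → ℝ} {Q : Y → ℝ} (hP : 0 < P) (hQ : 0 < Q) {K : Matrix X Y ℂ} {c : ℝ} (hc : 0 ≤ c)
    (hK2 : ∀ u v, ‖u ⬝ᵥ K *ᵥ v‖ ≤ √(∑ x, ‖u x‖ ^ 2) * √(∑ y, ‖v y‖ ^ 2))
    (hK1 : ∀ x y, ‖K x y‖ ≤ c) (hK : (K *ᵥ fun y ↦ (√(Q y) : ℂ)) = fun x ↦ (√(P x) : ℂ))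
    {α β : ℝ} (hα : 1 < α) (hαβ : 1 / α + 1 / β = 2) :
    2 * Real.log (1 / c) ≤ renyiEntropy α P + renyiEntropy β Q := by
  have norm_sqrt_rpow {r : ℝ} (hr : 0 ≤ r) (γ : ℝ) : ‖(√r : ℂ)‖ ^ (2 * γ) = r ^ γ := by
    rw [Complex.norm_real, Real.norm_of_nonneg (Real.sqrt_nonneg r), Real.rpow_mul (by positivity),
      Real.rpow_two, Real.sq_sqrt hr]
  have hconj := (holderConjugate_two_mul (by linarith) hαβ).symm
  have hβ : 2 * β ≤ 2 := by
    have hα_le : 1 / α ≤ 1 := (div_le_one (by linarith)).2 hα.le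
    have hβ_inv : 1 ≤ 1 / β := by linarith
    have hβ_pos : 0 < β := one_div_pos.1 (by linarith)
    linarith only [(one_le_div hβ_pos).1 hβ_inv]
  have h := rpow_sum_norm_mulVec_le_interp zero_le_one hc hconj hβ
    (by simpa only [one_mul] using hK2) hK1 (fun y ↦ (√(Q y) : ℂ))
  simp only [hK, norm_sqrt_rpow (hP.le _), norm_sqrt_rpow (hQ.le _), Real.one_rpow, one_mul] at h
  exact two_mul_log_one_div_le_of_rpow_le (sum_rpow_pos hP α) (sum_rpow_pos hQ β) hc hα hαβ h

end RenyiEntropy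

section GNS

open scoped MatrixOrder

variable {n : Type*} [Fintype n] {ρ A B : Matrix n n ℂ}

theorem trace_mul_nonneg_of_posSemidef (hA : A.PosSemidef) (hρ : ρ.PosSemidef) :
    0 ≤ (A * ρ).trace := by
  classical
  obtain ⟨B, rfl⟩ := CStarAlgebra.nonneg_iff_eq_star_mul_self.1 hA.nonneg
  rw [trace_mul_cycle, trace_mul_comm, ← Matrix.mul_assoc]
  exact (hρ.mul_mul_conjTranspose_same B).trace_nonneg

theorem re_trace_mul_le_re_trace_mul (hAB : A ≤ B) (hρ : ρ.PosSemidef) :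
    (A * ρ).trace.re ≤ (B * ρ).trace.re := by
  have h := (Complex.nonneg_iff.1 (trace_mul_nonneg_of_posSemidef (le_iff.1 hAB) hρ)).1
  rwa [Matrix.sub_mul, trace_sub, Complex.sub_re, sub_nonneg] at h

/-- The seminorm `A ↦ (tr (A* A ρ)) ^ (1 / 2)` of the GNS construction for the positive functional
`tr (· ρ)`. -/
noncomputable def gnsNorm (ρ A : Matrix n n ℂ) : ℝ := √(Aᴴ * A * ρ).trace.re

theorem gnsNorm_nonneg (ρ A : Matrix n n ℂ) : 0 ≤ gnsNorm ρ A := Real.sqrt_nonneg _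

theorem norm_trace_conjTranspose_mul_mul_le (hρ : ρ.PosSemidef) (A B : Matrix n n ℂ) :
    ‖(Aᴴ * B * ρ).trace‖ ≤ gnsNorm ρ A * gnsNorm ρ B := by
  let := toMatrixSeminormedAddCommGroup ρ hρ
  let := toMatrixInnerProductSpace ρ hρ
  have inner_eq (A B : Matrix n n ℂ) : inner ℂ A B = (Aᴴ * B * ρ).trace := by
    rw [Matrix.mul_assoc, trace_mul_comm Aᴴ]
    rfl
  have norm_eq (A : Matrix n n ℂ) : ‖A‖ = gnsNorm ρ A := by
    rw [norm_eq_sqrt_re_inner (𝕜 := ℂ), inner_eq]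
    rfl
  simpa only [inner_eq, norm_eq] using norm_inner_le_norm (𝕜 := ℂ) A B

open scoped Norms.L2Operator in
theorem conjTranspose_mul_self_le_norm_sq_smul_one [DecidableEq n] (K : Matrix n n ℂ) :
    Kᴴ * K ≤ ((‖toEuclideanCLM (𝕜 := ℂ) K‖ ^ 2 : ℝ) : ℂ) • 1 := by
  simpa only [l2_opNorm_toEuclideanCLM, Algebra.algebraMap_eq_smul_one, Complex.coe_smul,
    star_eq_conjTranspose] using CStarAlgebra.star_mul_le_algebraMap_norm_sq (a := K)

theorem gnsNorm_mul_le [DecidableEq n] (hρ : ρ.PosSemidef) (K B : Matrix n n ℂ) :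
    gnsNorm ρ (K * B) ≤ ‖toEuclideanCLM (𝕜 := ℂ) K‖ * gnsNorm ρ B := by
  have hK : (K * B)ᴴ * (K * B) ≤ ((‖toEuclideanCLM (𝕜 := ℂ) K‖ ^ 2 : ℝ) : ℂ) • (Bᴴ * B) := by
    simpa [star_eq_conjTranspose, Matrix.mul_assoc] using
      star_left_conjugate_le_conjugate (conjTranspose_mul_self_le_norm_sq_smul_one K) B
  refine Real.sqrt_le_iff.2 ⟨mul_nonneg (norm_nonneg _) (gnsNorm_nonneg ρ B), ?_⟩
  refine (re_trace_mul_le_re_trace_mul hK hρ).trans_eq ?_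
  have hB := (Complex.nonneg_iff.1
    (trace_mul_nonneg_of_posSemidef (posSemidef_conjTranspose_mul_self B) hρ)).1
  rw [mul_pow, gnsNorm, Real.sq_sqrt hB, Matrix.smul_mul, trace_smul, smul_eq_mul,
    Complex.re_ofReal_mul]

end GNS

section POVM

open scoped MatrixOrder

variable {n X Y : Type*} [DecidableEq n]

/-- A positive operator-valued measure with finitely many outcomes. -/
structure IsPOVM [Fintype X] (M : X → Matrix n n ℂ) : Prop where
  posSemidef (x : X) : (M x).PosSemidef
  sum_eq_one : ∑ x, M x = 1

theorem IsPOVM.isHermitian [Fintype X] {M : X → Matrix n n ℂ} (hM : IsPOVM M) (x : X) :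
    (M x).IsHermitian :=
  (hM.posSemidef x).isHermitian

variable [Fintype n]

/-- The Born probabilities `P(x) = tr (M_x ρ)`, with the real part taken to land in `ℝ`. -/
noncomputable def outcomeProb (ρ : Matrix n n ℂ) (M : X → Matrix n n ℂ) (x : X) : ℝ :=
  (M x * ρ).trace.re

/-- The overlap `c = max_{x,y} ‖M_x ^ (1/2) N_y ^ (1/2)‖` of two measurements. -/
noncomputable def povmOverlap (M : X → Matrix n n ℂ) (N : Y → Matrix n n ℂ) : ℝ :=
  ⨆ x, ⨆ y, ‖toEuclideanCLM (𝕜 := ℂ) (matRpow (M x) (1 / 2) * matRpow (N y) (1 / 2))‖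

theorem povmOverlap_nonneg (M : X → Matrix n n ℂ) (N : Y → Matrix n n ℂ) : 0 ≤ povmOverlap M N :=
  Real.iSup_nonneg fun _ ↦ Real.iSup_nonneg fun _ ↦ norm_nonneg _

theorem norm_toEuclideanCLM_le_povmOverlap [Finite X] [Finite Y] (M : X → Matrix n n ℂ)
    (N : Y → Matrix n n ℂ) (x : X) (y : Y) :
    ‖toEuclideanCLM (𝕜 := ℂ) (matRpow (M x) (1 / 2) * matRpow (N y) (1 / 2))‖ ≤ povmOverlap M N :=
  le_ciSup_of_le (Set.finite_range _).bddAbove x (le_ciSup_of_le (Set.finite_range _).bddAbove y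
    le_rfl)

theorem povmOverlap_le_povmOverlap_swap [Finite X] [Finite Y] (M : X → Matrix n n ℂ)
    (N : Y → Matrix n n ℂ) : povmOverlap M N ≤ povmOverlap N M := by
  refine Real.iSup_le (fun x ↦ Real.iSup_le (fun y ↦ ?_) (povmOverlap_nonneg N M))
    (povmOverlap_nonneg N M)
  rw [norm_toEuclideanCLM_matRpow_mul_comm]
  exact norm_toEuclideanCLM_le_povmOverlap N M y x

theorem povmOverlap_comm [Finite X] [Finite Y] (M : X → Matrix n n ℂ) (N : Y → Matrix n n ℂ) :
    povmOverlap M N = povmOverlap N M :=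
  (povmOverlap_le_povmOverlap_swap M N).antisymm (povmOverlap_le_povmOverlap_swap N M)

/-- The kernel with entries `tr (M_x N_y ρ) / √(P(x) Q(y))`, carrying `√Q` to `√P`. The entries
with `P(x) = 0` or `Q(y) = 0` are `0`, as division by zero gives `0`. -/
noncomputable def povmKernel (ρ : Matrix n n ℂ) (M : X → Matrix n n ℂ) (N : Y → Matrix n n ℂ) :
    Matrix X Y ℂ :=
  of fun x y ↦ (M x * N y * ρ).trace / (√(outcomeProb ρ M x) * √(outcomeProb ρ N y))

variable [Fintype X] [Fintype Y] {ρ : Matrix n n ℂ} {M : X → Matrix n n ℂ} {N : Y → Matrix n n ℂ}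

theorem outcomeProb_nonneg (hρ : ρ.PosSemidef) (hM : IsPOVM M) (x : X) :
    0 ≤ outcomeProb ρ M x :=
  (Complex.nonneg_iff.1 (trace_mul_nonneg_of_posSemidef (hM.posSemidef x) hρ)).1

theorem coe_outcomeProb (hρ : ρ.PosSemidef) (hM : IsPOVM M) (x : X) :
    (outcomeProb ρ M x : ℂ) = (M x * ρ).trace :=
  (Complex.eq_re_of_ofReal_le (trace_mul_nonneg_of_posSemidef (hM.posSemidef x) hρ)).symm

theorem outcomeProb_pos (hρ : ρ.PosSemidef) (hρ0 : ρ ≠ 0) (hM : IsPOVM M) :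
    0 < outcomeProb ρ M := by
  refine lt_of_le_of_ne (outcomeProb_nonneg hρ hM) fun h ↦ hρ0 (hρ.trace_eq_zero_iff.1 ?_)
  calc ρ.trace = ∑ x, (M x * ρ).trace := by
        rw [← trace_sum, ← Matrix.sum_mul, hM.sum_eq_one, Matrix.one_mul]
    _ = 0 := by simp [← coe_outcomeProb hρ hM, ← h]

theorem gnsNorm_matRpow_half (hM : IsPOVM M) (x : X) :
    gnsNorm ρ (matRpow (M x) (1 / 2)) = √(outcomeProb ρ M x) := by
  rw [gnsNorm, outcomeProb, (isHermitian_matRpow _ _).eq, matRpow_half_mul_self (hM.posSemidef x)]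

-- The difference of the two sides is `∑ y, (q y - S)ᴴ * N y * (q y - S)` with `S = ∑ y, q y • N y`.
theorem IsPOVM.conjTranspose_sum_smul_mul_self_le (hN : IsPOVM N) (q : Y → ℂ) :
    (∑ y, q y • N y)ᴴ * ∑ y, q y • N y ≤ ∑ y, (star (q y) * q y) • N y := by
  set S := ∑ y, q y • N y with hS
  have hS' : Sᴴ = ∑ y, star (q y) • N y := by
    simp only [hS, conjTranspose_sum, conjTranspose_smul, (hN.isHermitian _).eq]
  have expand (y : Y) : (q y • 1 - S)ᴴ * N y * (q y • 1 - S) =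
      (star (q y) * q y) • N y - (star (q y) • N y) * S - Sᴴ * (q y • N y) + Sᴴ * N y * S := by
    simp only [conjTranspose_sub, conjTranspose_smul, conjTranspose_one, Matrix.sub_mul,
      Matrix.mul_sub, Matrix.smul_mul, Matrix.mul_smul, Matrix.one_mul, Matrix.mul_one, smul_smul,
      smul_sub, mul_comm (q y)]
    abel
  have sum_expand : ∑ y, (q y • 1 - S)ᴴ * N y * (q y • 1 - S) =
      ∑ y, (star (q y) * q y) • N y - Sᴴ * S := by
    simp only [expand, Finset.sum_add_distrib, Finset.sum_sub_distrib, ← Matrix.sum_mul,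
      ← Matrix.mul_sum, hN.sum_eq_one, Matrix.mul_one, ← hS, ← hS']
    abel
  rw [le_iff, ← sum_expand]
  exact posSemidef_sum _ fun y _ ↦ (hN.posSemidef y).conjTranspose_mul_mul_same _

theorem gnsNorm_sum_smul_le (hρ : ρ.PosSemidef) (hN : IsPOVM N) (q : Y → ℂ) :
    gnsNorm ρ (∑ y, q y • N y) ≤ √(∑ y, ‖q y‖ ^ 2 * outcomeProb ρ N y) := by
  refine Real.sqrt_le_sqrt ?_
  refine (re_trace_mul_le_re_trace_mul (hN.conjTranspose_sum_smul_mul_self_le q) hρ).trans_eq ?_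
  simp only [Matrix.sum_mul, trace_sum, Complex.re_sum, Matrix.smul_mul, trace_smul, smul_eq_mul,
    Complex.star_def, Complex.conj_mul', ← Complex.ofReal_pow, Complex.re_ofReal_mul, outcomeProb]

theorem gnsNorm_sum_div_sqrt_smul_le (hρ : ρ.PosSemidef) (hN : IsPOVM N) (v : Y → ℂ) :
    gnsNorm ρ (∑ y, (v y / √(outcomeProb ρ N y)) • N y) ≤ √(∑ y, ‖v y‖ ^ 2) := by
  refine (gnsNorm_sum_smul_le hρ hN _).trans (Real.sqrt_le_sqrt (Finset.sum_le_sum fun y _ ↦ ?_))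
  rw [norm_div, div_pow, Complex.norm_real, Real.norm_of_nonneg (Real.sqrt_nonneg _),
    Real.sq_sqrt (outcomeProb_nonneg hρ hN y), div_mul_comm]
  exact mul_le_of_le_one_left (by positivity) (div_self_le_one _)

theorem norm_trace_mul_mul_le (hρ : ρ.PosSemidef) (hM : IsPOVM M) (hN : IsPOVM N) (x : X) (y : Y) :
    ‖(M x * N y * ρ).trace‖ ≤
      ‖toEuclideanCLM (𝕜 := ℂ) (matRpow (M x) (1 / 2) * matRpow (N y) (1 / 2))‖ *
        (√(outcomeProb ρ M x) * √(outcomeProb ρ N y)) := by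
  set m := matRpow (M x) (1 / 2)
  set k := matRpow (N y) (1 / 2)
  have factor : M x * N y = mᴴ * (m * k * k) := by
    rw [(isHermitian_matRpow _ _).eq, Matrix.mul_assoc m k k, ← Matrix.mul_assoc m m,
      matRpow_half_mul_self (hM.posSemidef x), matRpow_half_mul_self (hN.posSemidef y)]
  calc ‖(M x * N y * ρ).trace‖ ≤ gnsNorm ρ m * gnsNorm ρ (m * k * k) := by
        rw [factor]
        exact norm_trace_conjTranspose_mul_mul_le hρ _ _
    _ ≤ gnsNorm ρ m * (‖toEuclideanCLM (𝕜 := ℂ) (m * k)‖ * gnsNorm ρ k) := by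
        gcongr
        · exact gnsNorm_nonneg ρ m
        · exact gnsNorm_mul_le hρ _ _
    _ = _ := by rw [gnsNorm_matRpow_half hM, gnsNorm_matRpow_half hN, mul_left_comm]

theorem norm_povmKernel_apply_le (hρ : ρ.PosSemidef) (hM : IsPOVM M) (hN : IsPOVM N)
    (x : X) (y : Y) :
    ‖povmKernel ρ M N x y‖ ≤
      ‖toEuclideanCLM (𝕜 := ℂ) (matRpow (M x) (1 / 2) * matRpow (N y) (1 / 2))‖ := by
  rw [povmKernel, of_apply, norm_div, ← Complex.ofReal_mul, Complex.norm_real,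
    Real.norm_of_nonneg (by positivity)]
  exact div_le_of_le_mul₀ (by positivity) (norm_nonneg _) (norm_trace_mul_mul_le hρ hM hN x y)

theorem norm_dotProduct_povmKernel_mulVec_le (hρ : ρ.PosSemidef) (hM : IsPOVM M) (hN : IsPOVM N)
    (u : X → ℂ) (v : Y → ℂ) :
    ‖u ⬝ᵥ povmKernel ρ M N *ᵥ v‖ ≤ √(∑ x, ‖u x‖ ^ 2) * √(∑ y, ‖v y‖ ^ 2) := by
  set S := ∑ x, (star (u x) / √(outcomeProb ρ M x)) • M x with hS
  set T := ∑ y, (v y / √(outcomeProb ρ N y)) • N y with hT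
  have hS' : Sᴴ = ∑ x, (u x / √(outcomeProb ρ M x)) • M x := by
    simp [hS, conjTranspose_sum, conjTranspose_smul, (hM.isHermitian _).eq]
  have form_eq : u ⬝ᵥ povmKernel ρ M N *ᵥ v = (Sᴴ * T * ρ).trace := by
    simp only [hS', hT, dotProduct, mulVec, povmKernel, of_apply, Finset.mul_sum, Matrix.sum_mul,
      trace_sum, Matrix.smul_mul, Matrix.mul_smul, trace_smul, smul_eq_mul]
    rw [Finset.sum_comm]
    refine Finset.sum_congr rfl fun y _ ↦ Finset.sum_congr rfl fun x _ ↦ ?_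
    ring
  calc ‖u ⬝ᵥ povmKernel ρ M N *ᵥ v‖ ≤ gnsNorm ρ S * gnsNorm ρ T := by
        rw [form_eq]
        exact norm_trace_conjTranspose_mul_mul_le hρ S T
    _ ≤ √(∑ x, ‖u x‖ ^ 2) * √(∑ y, ‖v y‖ ^ 2) := by
        gcongr
        · exact gnsNorm_nonneg ρ T
        · simpa only [norm_star] using gnsNorm_sum_div_sqrt_smul_le hρ hM (fun x ↦ star (u x))
        · exact gnsNorm_sum_div_sqrt_smul_le hρ hN v

theorem povmKernel_mulVec_sqrt_outcomeProb (hρ : ρ.PosSemidef) (hM : IsPOVM M) (hN : IsPOVM N) :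
    (povmKernel ρ M N *ᵥ fun y ↦ (√(outcomeProb ρ N y) : ℂ)) =
      fun x ↦ (√(outcomeProb ρ M x) : ℂ) := by
  funext x
  have cancel (y : Y) : povmKernel ρ M N x y * √(outcomeProb ρ N y) =
      (M x * N y * ρ).trace / √(outcomeProb ρ M x) := by
    rw [povmKernel, of_apply, div_mul_eq_div_div]
    refine div_mul_cancel_of_imp fun hy ↦ ?_
    have h := norm_trace_mul_mul_le hρ hM hN x y
    rw [Complex.ofReal_eq_zero.1 hy, mul_zero, mul_zero, norm_le_zero_iff] at h
    rw [h, zero_div]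
  simp only [mulVec, dotProduct, cancel]
  rw [← Finset.sum_div, ← trace_sum, ← Matrix.sum_mul, ← Matrix.mul_sum, hN.sum_eq_one,
    Matrix.mul_one, ← coe_outcomeProb hρ hM, ← Complex.ofReal_div, Real.div_sqrt]

open scoped Norms.L2Operator in
theorem IsPOVM.norm_matRpow_half_le_one (hM : IsPOVM M) (x : X) :
    ‖toEuclideanCLM (𝕜 := ℂ) (matRpow (M x) (1 / 2))‖ ≤ 1 := by
  have hMx : M x ≤ 1 := hM.sum_eq_one ▸
    Finset.single_le_sum (fun x _ ↦ (hM.posSemidef x).nonneg) (Finset.mem_univ x)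
  rw [l2_opNorm_toEuclideanCLM, ← sq_le_one_iff₀ (norm_nonneg _), sq,
    ← CStarRing.norm_star_mul_self, star_eq_conjTranspose, (isHermitian_matRpow _ _).eq,
    matRpow_half_mul_self (hM.posSemidef x)]
  exact (CStarAlgebra.norm_le_one_iff_of_nonneg _ (hM.posSemidef x).nonneg).2 hMx

theorem povmOverlap_le_one (hM : IsPOVM M) (hN : IsPOVM N) : povmOverlap M N ≤ 1 := by
  refine Real.iSup_le (fun x ↦ Real.iSup_le (fun y ↦ ?_) zero_le_one) zero_le_one
  rw [map_mul]
  exact (norm_mul_le _ _).trans (mul_le_one₀ (hM.norm_matRpow_half_le_one x) (norm_nonneg _)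
    (hN.norm_matRpow_half_le_one y))

theorem two_mul_log_one_div_povmOverlap_le_of_one_lt (hρ : ρ.PosSemidef) (hρ0 : ρ ≠ 0)
    (hM : IsPOVM M) (hN : IsPOVM N) {α β : ℝ} (hα : 1 < α) (hαβ : 1 / α + 1 / β = 2) :
    2 * Real.log (1 / povmOverlap M N) ≤
      renyiEntropy α (outcomeProb ρ M) + renyiEntropy β (outcomeProb ρ N) :=
  two_mul_log_one_div_le_renyiEntropy_add (outcomeProb_pos hρ hρ0 hM) (outcomeProb_pos hρ hρ0 hN)
    (povmOverlap_nonneg M N) (norm_dotProduct_povmKernel_mulVec_le hρ hM hN)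
    (fun x y ↦ (norm_povmKernel_apply_le hρ hM hN x y).trans
      (norm_toEuclideanCLM_le_povmOverlap M N x y))
    (povmKernel_mulVec_sqrt_outcomeProb hρ hM hN) hα hαβ

theorem maassen_uffink_renyi_general (hρ : ρ.PosSemidef) (hρ0 : ρ ≠ 0) (hM : IsPOVM M)
    (hN : IsPOVM N) {α β : ℝ} (hα : 1 / 2 < α) (hαβ : 1 / α + 1 / β = 2) (hα1 : α ≠ 1) :
    2 * Real.log (1 / povmOverlap M N) ≤
      renyiEntropy α (outcomeProb ρ M) + renyiEntropy β (outcomeProb ρ N) := by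
  rcases hα1.lt_or_gt with hα1 | hα1
  · have hβ : 1 < β := by
      have hα_inv : 1 < 1 / α := (one_lt_div (by linarith)).2 hα1
      have hβ_pos : 0 < β := by linarith [(holderConjugate_two_mul hα hαβ).symm.pos]
      exact (div_lt_one hβ_pos).1 (by linarith)
    rw [povmOverlap_comm, add_comm (renyiEntropy α _)]
    exact two_mul_log_one_div_povmOverlap_le_of_one_lt hρ hρ0 hN hM hβ (by rwa [add_comm])
  · exact two_mul_log_one_div_povmOverlap_le_of_one_lt hρ hρ0 hM hN hα1 hαβ

theorem log_one_div_povmOverlap_nonneg (hM : IsPOVM M) (hN : IsPOVM N) :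
    0 ≤ Real.log (1 / povmOverlap M N) := by
  rw [one_div, Real.log_inv]
  exact neg_nonneg.2 (Real.log_nonpos (povmOverlap_nonneg M N) (povmOverlap_le_one hM hN))

end POVM

theorem maassen_uffink_renyi {A X Y : Type*} [Fintype A] [DecidableEq A]
    [Fintype X] [Nonempty X] [Fintype Y] [Nonempty Y]
    (ρ : Matrix A A ℂ) (hρ : ρ.PosSemidef) (hρ1 : ρ.trace = 1)
    (M : X → Matrix A A ℂ) (N : Y → Matrix A A ℂ)
    (hM : ∀ x, (M x).PosSemidef) (hMsum : ∑ x, M x = 1)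
    (hN : ∀ y, (N y).PosSemidef) (hNsum : ∑ y, N y = 1)
    (c : ℝ)
    (hc : c = ⨆ x : X, ⨆ y : Y, ‖Matrix.toEuclideanCLM (𝕜 := ℂ)
      (matRpow (M x) (1 / 2) * matRpow (N y) (1 / 2))‖)
    (α β : ℝ) (hα : (1 : ℝ) / 2 < α) (hβ : (1 : ℝ) / 2 < β)
    (hab : 1 / α + 1 / β = 2) (hα1 : α ≠ 1) :
    (1 - α)⁻¹ * Real.log (∑ x, ((M x * ρ).trace.re) ^ α) +
      (1 - β)⁻¹ * Real.log (∑ y, ((N y * ρ).trace.re) ^ β) ≥ Real.log (1 / c) := by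
  have hMP : IsPOVM M := ⟨hM, hMsum⟩
  have hNP : IsPOVM N := ⟨hN, hNsum⟩
  have hρ0 : ρ ≠ 0 := by rintro rfl; simp at hρ1
  calc Real.log (1 / c) = Real.log (1 / povmOverlap M N) := by rw [hc, povmOverlap]
    _ ≤ 2 * Real.log (1 / povmOverlap M N) := by
      linarith [log_one_div_povmOverlap_nonneg hMP hNP]
    _ ≤ renyiEntropy α (outcomeProb ρ M) + renyiEntropy β (outcomeProb ρ N) :=
      maassen_uffink_renyi_general hρ hρ0 hMP hNP hα hab hα1
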